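/- arXiv:1801.04625 — 2 statements merged into one kernel-verified Lean document; each statement's English description precedes it below -/
import Mathlib

section
/- Let u = a+b+1 be a real number, m a positive integer, and suppose Ψ_1, …, Ψ_m : ℝ → ℝ are rational functions with at most simple poles such that: (1) for every polynomial p, the function L_p(x) = ∑_{j=1}^m (-1)^j p(θ(x-j)) Ψ_j(x) is a polynomial, where θ(x) = x(x+a+b+1); and (2) the function M(x) = ∑_{j=1}^m (-1)^j Ψ_j(x+j) satisfies M(-(x+a+b+1)) = -M(x) for all x. Then M is a polynomial. -/
open Polynomial

open Filter Topology in
lemma aux_comb {ι : Type} [Fintype ι] [DecidableEq ι] (A B : ι → ℝ[X]) :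
    ∃ N : ℝ[X], ∀ (K : Type) [Field K] [Algebra ℝ K] (z : K),
      (∀ j, aeval z (B j) ≠ 0) →
      ∑ j, aeval z (A j) / aeval z (B j) = aeval z N / aeval z (∏ j, B j) := by
  refine ⟨∑ j, A j * ∏ i ∈ Finset.univ.erase j, B i, ?_⟩
  intro K _ _ z hz
  have hP : aeval z (∏ j, B j) ≠ 0 := by
    rw [map_prod]; exact Finset.prod_ne_zero_iff.2 fun j _ => hz j
  rw [eq_div_iff hP, Finset.sum_mul, map_sum]
  refine Finset.sum_congr rfl fun j _ => ?_
  rw [← Finset.mul_prod_erase Finset.univ B (Finset.mem_univ j), map_mul, map_mul]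
  have := hz j
  field_simp

lemma aux_transfer {ι : Type} [Fintype ι] [DecidableEq ι] (A B : ι → ℝ[X]) (hB : ∀ j, B j ≠ 0)
    (L : ℝ[X])
    (h : ∀ x : ℝ, (∀ j, (B j).eval x ≠ 0) → ∑ j, (A j).eval x / (B j).eval x = L.eval x)
    (z : ℂ) (hz : ∀ j, aeval z (B j) ≠ 0) :
    ∑ j, aeval z (A j) / aeval z (B j) = aeval z L := by
  obtain ⟨N, hN⟩ := aux_comb A B
  have hD : (∏ j, B j) ≠ 0 := Finset.prod_ne_zero_iff.2 fun j _ => hB j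
  have key : (N - L * ∏ j, B j) * ∏ j, B j = 0 := by
    apply Polynomial.funext
    intro x
    by_cases hx : ∀ j, (B j).eval x ≠ 0
    · have h1 := hN ℝ x (by simpa [coe_aeval_eq_eval] using hx)
      have h2 := h x hx
      simp only [coe_aeval_eq_eval] at h1
      have hP : (∏ j, B j).eval x ≠ 0 := by
        rw [eval_prod]; exact Finset.prod_ne_zero_iff.2 fun j _ => hx j
      rw [h2, eq_div_iff hP] at h1
      simp [h1]
    · push Not at hx
      obtain ⟨j, hj⟩ := hx
      have : (∏ j, B j).eval x = 0 := by
        rw [eval_prod]; exact Finset.prod_eq_zero (Finset.mem_univ j) hj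
      simp [this]
  have key2 : N = L * ∏ j, B j := by
    rcases mul_eq_zero.1 key with h | h
    · exact sub_eq_zero.1 h
    · exact absurd h hD
  have hP : aeval z (∏ j, B j) ≠ 0 := by
    rw [map_prod]; exact Finset.prod_ne_zero_iff.2 fun j _ => hz j
  rw [hN ℂ z hz, key2, map_mul, mul_div_assoc, div_self hP, mul_one]

open Filter Topology in
lemma aux_ev (B : ℝ[X]) (hB : B ≠ 0) (c : ℂ) : ∀ᶠ z in 𝓝[≠] c, aeval z B ≠ 0 := by
  have hB' : B.map (algebraMap ℝ ℂ) ≠ 0 := (Polynomial.map_ne_zero_iff (algebraMap ℝ ℂ).injective).2 hB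
  have hf : {z : ℂ | aeval z B = 0}.Finite := by
    refine ((B.map (algebraMap ℝ ℂ)).roots.toFinset.finite_toSet).subset ?_
    intro z hz
    simp [hB', IsRoot, eval_map_algebraMap, hB] at hz ⊢
    exact hz
  have := hf.eventually_cofinite_notMem
  exact (this.filter_mono (nhdsNE_le_cofinite c))

open Filter Topology in
lemma aux_res (A B : ℝ[X]) (hB : Squarefree B) (c : ℂ) :
    ∃ r : ℂ, Tendsto (fun z : ℂ => (z - c) * (aeval z A / aeval z B)) (𝓝[≠] c) (𝓝 r) := by
  have hcA : Tendsto (fun z : ℂ => aeval z A) (𝓝[≠] c) (𝓝 (aeval c A)) :=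
    ((Polynomial.continuous_aeval A).tendsto c).mono_left nhdsWithin_le_nhds
  have hz0 : Tendsto (fun z : ℂ => z - c) (𝓝[≠] c) (𝓝 0) := by
    have : Continuous (fun z : ℂ => z - c) := by fun_prop
    simpa using (this.tendsto c).mono_left nhdsWithin_le_nhds
  by_cases h : aeval c B = 0
  · have hsep : Squarefree (B.map (algebraMap ℝ ℂ)) :=
      ((PerfectField.separable_iff_squarefree.2 hB).map).squarefree
    have hroot : (B.map (algebraMap ℝ ℂ)).IsRoot c := by
      simpa [IsRoot, eval_map_algebraMap] using h
    obtain ⟨D, hD⟩ := dvd_iff_isRoot.2 hroot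
    have hDc : D.eval c ≠ 0 := by
      intro h0
      obtain ⟨E, hE⟩ := dvd_iff_isRoot.2 h0
      have := hsep (X - C c) ⟨E, by rw [hD, hE, mul_assoc]⟩
      exact not_isUnit_X_sub_C c this
    have hcD : Tendsto (fun z : ℂ => D.eval z) (𝓝[≠] c) (𝓝 (D.eval c)) :=
      (D.continuous.tendsto c).mono_left nhdsWithin_le_nhds
    refine ⟨_, (hcA.div hcD hDc).congr' ?_⟩
    filter_upwards [self_mem_nhdsWithin] with z hz
    have hz' : z - c ≠ 0 := sub_ne_zero.2 hz
    have : aeval z B = (z - c) * D.eval z := by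
      rw [← eval_map_algebraMap, hD]; simp
    simp only [Pi.div_apply]
    rw [this]
    rw [mul_div_assoc', mul_div_mul_left _ _ hz']
  · have hcB : Tendsto (fun z : ℂ => aeval z B) (𝓝[≠] c) (𝓝 (aeval c B)) :=
      ((Polynomial.continuous_aeval B).tendsto c).mono_left nhdsWithin_le_nhds
    exact ⟨_, hz0.mul (hcA.div hcB h)⟩

open Filter Topology in
lemma aux_dvd (N D : ℝ[X]) (hD : D ≠ 0)
    (h : ∀ c : ℂ, Tendsto (fun z : ℂ => (z - c) * (aeval z N / aeval z D)) (𝓝[≠] c) (𝓝 0)) :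
    D ∣ N := by
  by_cases hN0 : N = 0
  · simp [hN0]
  rw [← Polynomial.map_dvd_map' (algebraMap ℝ ℂ)]
  set N' := N.map (algebraMap ℝ ℂ) with hN'
  set D' := D.map (algebraMap ℝ ℂ) with hD'
  have hD0 : D' ≠ 0 := (Polynomial.map_ne_zero_iff (algebraMap ℝ ℂ).injective).2 hD
  have hN0' : N' ≠ 0 := (Polynomial.map_ne_zero_iff (algebraMap ℝ ℂ).injective).2 hN0
  refine (IsAlgClosed.splits D').dvd_of_roots_le_roots hD0 ?_
  rw [Multiset.le_iff_count]
  intro c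
  rw [count_roots, count_roots]
  by_contra hlt
  push Not at hlt
  obtain ⟨E, hE, hEc⟩ := exists_eq_pow_rootMultiplicity_mul_and_not_dvd N' hN0' c
  obtain ⟨F, hF, hFc⟩ := exists_eq_pow_rootMultiplicity_mul_and_not_dvd D' hD0 c
  set k := rootMultiplicity c N'
  obtain ⟨d, hd⟩ := Nat.exists_eq_add_of_lt hlt
  rw [hd] at hF
  have hE0 : E.eval c ≠ 0 := fun h0 => hEc (dvd_iff_isRoot.2 h0)
  have hF0 : F.eval c ≠ 0 := fun h0 => hFc (dvd_iff_isRoot.2 h0)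
  have hcE : Tendsto (fun z : ℂ => E.eval z) (𝓝[≠] c) (𝓝 (E.eval c)) :=
      (E.continuous.tendsto c).mono_left nhdsWithin_le_nhds
  have hcF : Tendsto (fun z : ℂ => (z - c) ^ d * F.eval z) (𝓝[≠] c) (𝓝 ((c - c) ^ d * F.eval c)) := by
    have : Continuous (fun z : ℂ => (z - c) ^ d * F.eval z) := by
      have := F.continuous
      fun_prop
    exact (this.tendsto c).mono_left nhdsWithin_le_nhds
  have h2 := hcF.mul (h c)
  rw [mul_zero] at h2
  refine hE0 (tendsto_nhds_unique hcE (h2.congr' ?_))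
  have hFev : ∀ᶠ z in 𝓝[≠] c, F.eval z ≠ 0 :=
    ((F.continuous.tendsto c).mono_left nhdsWithin_le_nhds).eventually_ne hF0
  filter_upwards [self_mem_nhdsWithin, hFev] with z hz hFz
  have hz' : z - c ≠ 0 := sub_ne_zero.2 hz
  have e1 : aeval z N = (z - c) ^ k * E.eval z := by
    rw [← eval_map_algebraMap, ← hN', hE]; simp
  have e2 : aeval z D = (z - c) ^ (k + d + 1) * F.eval z := by
    rw [← eval_map_algebraMap, ← hD', hF]; simp
  rw [e1, e2]
  field_simp
  ring

/-- separation of values -/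
lemma aux_sep {ι : Type} [Fintype ι] (t w : ι → ℂ)
    (h : ∀ n : ℕ, ∑ j, t j ^ n * w j = 0) (v : ℂ) :
    ∑ j, (if t j = v then w j else 0) = 0 := by
  classical
  have hp : ∀ p : ℂ[X], ∑ j, p.eval (t j) * w j = 0 := by
    intro p
    simp only [eval_eq_sum_range, Finset.sum_mul]
    rw [Finset.sum_comm]
    refine Finset.sum_eq_zero fun n _ => ?_
    simp only [mul_assoc, ← Finset.mul_sum, h, mul_zero]
  have h1 := hp (∏ s ∈ (Finset.univ.image t).erase v, (X - C s))
  set q : ℂ[X] := ∏ s ∈ (Finset.univ.image t).erase v, (X - C s) with hq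
  have hqv : q.eval v ≠ 0 := by
    rw [hq, eval_prod]
    refine Finset.prod_ne_zero_iff.2 fun s hs => ?_
    simp only [eval_sub, eval_X, eval_C]
    exact sub_ne_zero.2 (Finset.ne_of_mem_erase hs).symm
  have h2 : ∑ j, q.eval (t j) * w j = q.eval v * ∑ j, (if t j = v then w j else 0) := by
    rw [Finset.mul_sum]
    refine Finset.sum_congr rfl fun j _ => ?_
    by_cases hj : t j = v
    · simp [hj]
    · have : q.eval (t j) = 0 := by
        rw [hq, eval_prod]
        exact Finset.prod_eq_zero (i := t j) (by simp [hj]) (by simp)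
      simp [this, hj]
  rw [h2] at h1
  exact (mul_eq_zero.1 h1).resolve_left hqv

lemma aux_pair {ι : Type} [Fintype ι] (s : ι → ℂ) (hs : Function.Injective s) (u : ℂ)
    (w : ι → ℂ → ℂ)
    (h : ∀ c v : ℂ, ∑ j, (if (c - s j) * ((c - s j) + u) = v then w j c else 0) = 0) (y : ℂ) :
    ∑ j, w j (y + s j) + ∑ j, w j (-(y + u) + s j) = 0 := by
  classical
  by_cases hk : 2 * y + u = 0
  · have h0 : ∀ j, w j (y + s j) = 0 := by
      intro j
      rw [← h (y + s j) (y * (y + u)), Finset.sum_eq_single j]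
      · simp
      · intro i _ hij
        rw [if_neg]
        intro he
        have : (s j - s i) * (s j - s i) = 0 := by linear_combination he - (s j - s i) * hk
        rcases mul_eq_zero.1 this with h | h <;> exact hij (hs (sub_eq_zero.1 h)).symm
      · simp
    have hy : -(y + u) = y := by linear_combination -hk
    simp [hy, h0]
  · have B : ∀ y : ℂ, 2 * y + u ≠ 0 → ∀ j, w j (y + s j)
        = - ∑ i, (if s i = s j + (2 * y + u) then w i (y + s j) else 0) := by
      intro y hk j
      have h1 := h (y + s j) (y * (y + u))
      have h2 : ∀ i, (if (y + s j - s i) * ((y + s j - s i) + u) = y * (y + u) then w i (y + s j) else 0)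
          = (if i = j then w j (y + s j) else 0) +
            (if s i = s j + (2 * y + u) then w i (y + s j) else 0) := by
        intro i
        by_cases hij : i = j
        · subst hij
          simp [hk]
        · have : ((y + s j - s i) * ((y + s j - s i) + u) = y * (y + u)) ↔
              s i = s j + (2 * y + u) := by
            constructor
            · intro he
              have : (s j - s i) * (s j - s i + (2 * y + u)) = 0 := by linear_combination he
              rcases mul_eq_zero.1 this with h | h
              · exact absurd (hs (sub_eq_zero.1 h)).symm hij
              · linear_combination -h
            · intro he; rw [he]; ring
          simp [hij, this]
      rw [Finset.sum_congr rfl fun i _ => h2 i, Finset.sum_add_distrib] at h1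
      simp at h1
      linear_combination h1
    have hk' : 2 * (-(y + u)) + u ≠ 0 := by
      intro h; apply hk; linear_combination -h
    rw [Finset.sum_congr rfl fun j _ => B y hk j, Finset.sum_congr rfl fun j _ => B _ hk' j]
    rw [Finset.sum_neg_distrib, Finset.sum_neg_distrib, ← neg_add, neg_eq_zero]
    rw [Finset.sum_comm, ← Finset.sum_add_distrib]
    refine Finset.sum_eq_zero fun i _ => ?_
    rw [← Finset.sum_add_distrib]
    refine Finset.sum_eq_zero fun j _ => ?_
    by_cases hij : s i = s j + (2 * y + u)
    · have hji : s j = s i + (2 * (-(y + u)) + u) := by rw [hij]; ring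
      rw [if_pos hij, if_pos hji]
      have e : -(y + u) + s i = y + s j := by rw [hij]; ring
      rw [e]
      have := B y hk j
      rw [Finset.sum_eq_single i] at this
      · rw [if_pos hij] at this
        rw [this]; ring
      · intro i' _ hi'
        rw [if_neg]
        intro he
        exact hi' (hs (he.trans hij.symm))
      · simp
    · have hji : ¬ s j = s i + (2 * (-(y + u)) + u) := by
        intro h; apply hij; rw [h]; ring
      rw [if_neg hij, if_neg hji, add_zero]

open Filter Topology in

theorem stmt_12 (a b : ℝ) (m : ℕ) (hm : 0 < m)
    (num den : Fin m → ℝ[X])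
    -- each Ψ_j = num j / den j has at most simple poles (squarefree denominator)
    (hden : ∀ j, Squarefree (den j))
    (Ψ : Fin m → ℝ → ℝ)
    (hΨ : ∀ j x, Ψ j x = (num j).eval x / (den j).eval x)
    -- (1) for every polynomial p, L_p(x) = ∑_j (-1)^j p(θ(x-j)) Ψ_j(x) is a polynomial
    (hL : ∀ p : ℝ[X], ∃ L : ℝ[X], ∀ x : ℝ, (∀ j, (den j).eval x ≠ 0) →
      (∑ j : Fin m, (-1 : ℝ) ^ ((j : ℕ) + 1) *
          p.eval ((x - ((j : ℕ) + 1)) * ((x - ((j : ℕ) + 1)) + a + b + 1)) * Ψ j x)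
        = L.eval x)
    (M : ℝ → ℝ)
    (hM : ∀ x, M x = ∑ j : Fin m, (-1 : ℝ) ^ ((j : ℕ) + 1) * Ψ j (x + ((j : ℕ) + 1)))
    -- (2) skew-invariance of M under x ↦ -(x+a+b+1), away from the poles
    (hskew : ∀ x : ℝ,
      (∀ j, (den j).eval (x + ((j : ℕ) + 1)) ≠ 0) →
      (∀ j, (den j).eval (-(x + a + b + 1) + ((j : ℕ) + 1)) ≠ 0) →
      M (-(x + a + b + 1)) = -M x) :
    -- M is a polynomial
    ∃ P : ℝ[X], ∀ x : ℝ, (∀ j, (den j).eval (x + ((j : ℕ) + 1)) ≠ 0) →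
      M x = P.eval x := by

  classical
  have hd0 : ∀ j, den j ≠ 0 := fun j => (hden j).ne_zero
  set sR : Fin m → ℝ := fun j => ((j : ℕ) : ℝ) + 1 with hsR
  set s : Fin m → ℂ := fun j => ((j : ℕ) : ℂ) + 1 with hs
  set e : Fin m → ℝ := fun j => (-1 : ℝ) ^ ((j : ℕ) + 1) with he
  set u : ℂ := (a : ℂ) + b + 1 with hu
  have hscast : ∀ j, ((sR j : ℝ) : ℂ) = s j := by intro j; simp [hsR, hs]
  have hsinj : Function.Injective s := by
    intro i j hij
    simp only [hs, add_left_inj, Nat.cast_inj] at hij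
    exact Fin.ext hij
  have hres := fun j c => aux_res (num j) (den j) (hden j) c
  choose r hr using hres
  set w : Fin m → ℂ → ℂ := fun j c => (e j : ℂ) * r j c with hw
  -- step A
  have hA : ∀ (c : ℂ) (n : ℕ), ∑ j, ((c - s j) * ((c - s j) + u)) ^ n * w j c = 0 := by
    intro c n
    obtain ⟨L, hL⟩ := hL (X ^ n)
    have T := aux_transfer (fun j => C (e j) * ((X - C (sR j)) * ((X - C (sR j)) + C (a + b + 1))) ^ n
      * num j) den hd0 L (by
        intro x hx
        rw [← hL x hx]
        refine Finset.sum_congr rfl fun j _ => ?_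
        rw [hΨ]
        simp only [eval_mul, eval_pow, eval_add, eval_sub, eval_X, eval_C, he, hsR]
        ring)
    have hlim : Tendsto (fun z : ℂ => ∑ j, ((z - s j) * ((z - s j) + u)) ^ n *
        ((e j : ℂ) * ((z - c) * (aeval z (num j) / aeval z (den j))))) (𝓝[≠] c)
        (𝓝 (∑ j, ((c - s j) * ((c - s j) + u)) ^ n * w j c)) := by
      refine tendsto_finsetSum _ fun j _ => ?_
      refine Tendsto.mul ?_ ((hr j c).const_mul _)
      have : Continuous (fun z : ℂ => ((z - s j) * ((z - s j) + u)) ^ n) := by fun_prop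
      exact (this.tendsto c).mono_left nhdsWithin_le_nhds
    have hlim2 : Tendsto (fun z : ℂ => (z - c) * aeval z L) (𝓝[≠] c) (𝓝 0) := by
      have : Continuous (fun z : ℂ => (z - c) * aeval z L) := by
        have := Polynomial.continuous_aeval (A := ℂ) L
        fun_prop
      simpa using (this.tendsto c).mono_left (nhdsWithin_le_nhds (s := {c}ᶜ))
    refine tendsto_nhds_unique hlim (hlim2.congr' ?_)
    have hev : ∀ᶠ z in 𝓝[≠] c, ∀ j, aeval z (den j) ≠ 0 :=
      eventually_all.2 fun j => aux_ev (den j) (hd0 j) c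
    filter_upwards [hev] with z hz
    rw [← T z hz, Finset.mul_sum]
    refine Finset.sum_congr rfl fun j _ => ?_
    simp only [map_mul, map_pow, map_add, map_sub, aeval_X, aeval_C, ← hscast, hu,
      Complex.coe_algebraMap, map_one]
    push_cast
    ring
  have hB := fun c => aux_sep (fun j => (c - s j) * ((c - s j) + u)) (fun j => w j c) (hA c)
  have hpair := aux_pair s hsinj u w hB
  -- the shifted data
  set A1 : Fin m → ℝ[X] := fun j => C (e j) * (num j).comp (X + C (sR j)) with hA1
  set B1 : Fin m → ℝ[X] := fun j => (den j).comp (X + C (sR j)) with hB1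
  have hcomp0 : ∀ j, B1 j ≠ 0 := by
    intro j h0
    apply hd0 j
    have h1 : (B1 j).comp (X - C (sR j)) = den j := by
      simp [hB1, comp_assoc]
    rw [← h1, h0, zero_comp]
  set Mh : ℂ → ℂ := fun z => ∑ j, aeval z (A1 j) / aeval z (B1 j) with hMh
  have hMR : ∀ x, M x = ∑ j, (A1 j).eval x / (B1 j).eval x := by
    intro x
    rw [hM]
    refine Finset.sum_congr rfl fun j _ => ?_
    rw [hΨ]
    simp [hA1, hB1, hsR, he, eval_comp]
    ring
  have hMlim : ∀ y : ℂ, Tendsto (fun z => (z - y) * Mh z) (𝓝[≠] y) (𝓝 (∑ j, w j (y + s j))) := by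
    intro y
    have hl : Tendsto (fun z : ℂ => ∑ j, (e j : ℂ) * (((z + s j) - (y + s j)) *
        (aeval (z + s j) (num j) / aeval (z + s j) (den j)))) (𝓝[≠] y)
        (𝓝 (∑ j, w j (y + s j))) := by
      refine tendsto_finsetSum _ fun j _ => ?_
      refine Tendsto.const_mul _ ((hr j (y + s j)).comp ?_)
      refine tendsto_nhdsWithin_iff.2 ⟨?_, ?_⟩
      · have : Continuous (fun z : ℂ => z + s j) := by fun_prop
        exact (this.tendsto y).mono_left nhdsWithin_le_nhds
      · filter_upwards [self_mem_nhdsWithin] with z hz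
        simpa using hz
    refine hl.congr fun z => ?_
    rw [hMh, Finset.mul_sum]
    refine Finset.sum_congr rfl fun j _ => ?_
    simp only [hA1, hB1, map_mul, aeval_comp, map_add, aeval_X, aeval_C, Complex.coe_algebraMap,
      hscast]
    ring
  -- skewness
  set rf : ℝ[X] := -(X + C (a + b + 1)) with hrf
  have hrfinv : rf.comp rf = X := by
    simp [hrf]
    ring
  have hskewC : ∀ z : ℂ, (∀ j, aeval z (B1 j) ≠ 0) → (∀ j, aeval z ((B1 j).comp rf) ≠ 0) →
      Mh z + Mh (-(z + u)) = 0 := by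
    intro z h1 h2
    have T := aux_transfer (Sum.elim A1 (fun j => (A1 j).comp rf))
      (Sum.elim B1 (fun j => (B1 j).comp rf)) (by
        rintro (j | j)
        · exact hcomp0 j
        · intro h0
          apply hcomp0 j
          have h1 : ((B1 j).comp rf).comp rf = B1 j := by
            rw [comp_assoc, hrfinv, comp_X]
          simp only [Sum.elim_inr] at h0
          rw [← h1, h0, zero_comp]) 0 (by
        intro x hx
        have hx1 : ∀ j, (B1 j).eval x ≠ 0 := fun j => hx (Sum.inl j)
        have hx2 : ∀ j, ((B1 j).comp rf).eval x ≠ 0 := fun j => hx (Sum.inr j)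
        have hre : rf.eval x = -(x + a + b + 1) := by simp [hrf]; ring
        have hS := hskew x (fun j => by simpa [hB1, hsR, eval_comp] using hx1 j)
          (fun j => by
            have := hx2 j
            rw [eval_comp, hre] at this
            simpa only [hB1, hsR, eval_comp, eval_add, eval_X, eval_C] using this)
        rw [hMR, hMR] at hS
        rw [Fintype.sum_sum_type]
        simp only [Sum.elim_inl, Sum.elim_inr, eval_comp (q := rf), hre, eval_zero]
        rw [hS]; ring) z (by
        rintro (j | j)
        · exact h1 j
        · exact h2 j)
    rw [Fintype.sum_sum_type] at T
    have hre : aeval z rf = -(z + u) := by simp [hrf, hu]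
    simp only [Sum.elim_inl, Sum.elim_inr, aeval_comp (q := rf), hre, map_zero] at T
    exact T
  have hR : ∀ y : ℂ, ∑ j, w j (y + s j) = 0 := by
    intro y
    have h1 := hMlim (-(y + u))
    have h2 : Tendsto (fun z : ℂ => -(z + u)) (𝓝[≠] y) (𝓝[≠] (-(y + u))) := by
      refine tendsto_nhdsWithin_iff.2 ⟨?_, ?_⟩
      · have : Continuous (fun z : ℂ => -(z + u)) := by fun_prop
        exact (this.tendsto y).mono_left nhdsWithin_le_nhds
      · filter_upwards [self_mem_nhdsWithin] with z hz
        simpa using hz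
    have h3 := h1.comp h2
    have hev1 : ∀ᶠ z in 𝓝[≠] y, ∀ j, aeval z (B1 j) ≠ 0 :=
      eventually_all.2 fun j => aux_ev _ (hcomp0 j) y
    have hev2 : ∀ᶠ z in 𝓝[≠] y, ∀ j, aeval z ((B1 j).comp rf) ≠ 0 :=
      eventually_all.2 fun j => aux_ev _ (by
        intro h0
        apply hcomp0 j
        have h1 : ((B1 j).comp rf).comp rf = B1 j := by
          rw [comp_assoc, hrfinv, comp_X]
        rw [← h1, h0, zero_comp]) y
    have h4 : ∑ j, w j (-(y + u) + s j) = ∑ j, w j (y + s j) := by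
      refine tendsto_nhds_unique h3 ((hMlim y).congr' ?_)
      filter_upwards [hev1, hev2] with z hz1 hz2
      have := hskewC z hz1 hz2
      simp only [Function.comp]
      linear_combination (z - y) * this
    have h5 := hpair y
    rw [h4] at h5
    linear_combination h5 / 2
  obtain ⟨N, hN⟩ := aux_comb A1 B1
  have hD : (∏ j, B1 j) ≠ 0 := Finset.prod_ne_zero_iff.2 fun j _ => hcomp0 j
  have hdvd : (∏ j, B1 j) ∣ N := by
    refine aux_dvd N _ hD fun c => ?_
    have h1 := hMlim c
    rw [hR c] at h1
    refine h1.congr' ?_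
    have hev1 : ∀ᶠ z in 𝓝[≠] c, ∀ j, aeval z (B1 j) ≠ 0 :=
      eventually_all.2 fun j => aux_ev _ (hcomp0 j) c
    filter_upwards [hev1] with z hz
    rw [← hN ℂ z hz]
  obtain ⟨P, hP⟩ := hdvd
  refine ⟨P, fun x hx => ?_⟩
  have hx1 : ∀ j, (B1 j).eval x ≠ 0 := fun j => by simpa [hB1, hsR, eval_comp] using hx j
  have h1 := hN ℝ x (by simpa only [coe_aeval_eq_eval] using hx1)
  simp only [coe_aeval_eq_eval] at h1
  have hPx : (∏ j, B1 j).eval x ≠ 0 := by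
    rw [eval_prod]; exact Finset.prod_ne_zero_iff.2 fun j _ => hx1 j
  rw [hMR, h1, hP, eval_mul, mul_comm, mul_div_assoc, div_self hPx, mul_one]
end

section
/- With the hypotheses of the previous statement (Ψ_j rational with simple poles, L_p polynomial for all polynomials p, and M skew-invariant), assume additionally that deg L_{x^g} ≤ 2g + deg L_1 for all g ≥ 0. Then M is a polynomial of degree at most deg L_1. -/
open Polynomial

def PD (e : ℤ) (n : ℝ[X]) : Prop := n = 0 ∨ (n.natDegree : ℤ) ≤ e

lemma PD.add {e : ℤ} {n k : ℝ[X]} (hn : PD e n) (hk : PD e k) : PD e (n + k) := by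
  rcases hn with rfl | hn
  · simpa using hk
  rcases hk with rfl | hk
  · right; simpa using hn
  right
  have := natDegree_add_le n k
  have h2 : ((n + k).natDegree : ℤ) ≤ max (n.natDegree : ℤ) k.natDegree := by exact_mod_cast this
  exact h2.trans (max_le hn hk)

lemma PD.mul {e f : ℤ} {n k : ℝ[X]} (hn : PD e n) (hk : PD f k) : PD (e + f) (n * k) := by
  rcases hn with rfl | hn
  · left; simp
  rcases hk with rfl | hk
  · left; simp
  right
  have := natDegree_mul_le (p := n) (q := k)
  omega

lemma PD.mono {e f : ℤ} {n : ℝ[X]} (hn : PD e n) (h : e ≤ f) : PD f n :=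
  hn.imp id (fun h' => h'.trans h)

def RD (e : ℤ) (f : ℝ → ℝ) : Prop :=
  ∃ n D : ℝ[X], D ≠ 0 ∧ PD (D.natDegree + e) n ∧
    ∀ᶠ x in Filter.atTop, f x = n.eval x / D.eval x

lemma ev_ne {D : ℝ[X]} (hD : D ≠ 0) : ∀ᶠ x in Filter.atTop, D.eval x ≠ 0 := by
  have := (D.roots.toFinset.finite_toSet).bddAbove
  obtain ⟨B, hB⟩ := this
  filter_upwards [Filter.eventually_gt_atTop B] with x hx h0
  have : x ∈ (D.roots.toFinset : Set ℝ) := by simp [hD, h0]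
  exact absurd (hB this) (not_le.mpr hx)

lemma RD.congr {e : ℤ} {f g : ℝ → ℝ} (hf : RD e f) (h : ∀ᶠ x in Filter.atTop, g x = f x) :
    RD e g := by
  obtain ⟨n, D, hD, hn, hh⟩ := hf
  exact ⟨n, D, hD, hn, by filter_upwards [hh, h] with x h1 h2; rw [h2, h1]⟩

lemma RD.mono {e e' : ℤ} {f : ℝ → ℝ} (hf : RD e f) (h : e ≤ e') : RD e' f := by
  obtain ⟨n, D, hD, hn, hh⟩ := hf
  exact ⟨n, D, hD, hn.mono (by omega), hh⟩

lemma RD.add {e : ℤ} {f g : ℝ → ℝ} (hf : RD e f) (hg : RD e g) :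
    RD e (fun x => f x + g x) := by
  obtain ⟨n, D, hD, hn, hh⟩ := hf
  obtain ⟨n', D', hD', hn', hh'⟩ := hg
  refine ⟨n * D' + n' * D, D * D', mul_ne_zero hD hD', ?_, ?_⟩
  · rw [natDegree_mul hD hD']
    refine PD.add ?_ ?_
    · exact (hn.mul (Or.inr le_rfl : PD D'.natDegree D')).mono (by push_cast; omega)
    · exact (hn'.mul (Or.inr le_rfl : PD D.natDegree D)).mono (by push_cast; omega)
  · filter_upwards [hh, hh', ev_ne hD, ev_ne hD'] with x h1 h2 h3 h4
    rw [h1, h2]; simp only [eval_add, eval_mul]; field_simp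

lemma RD.mul {e e' : ℤ} {f g : ℝ → ℝ} (hf : RD e f) (hg : RD e' g) :
    RD (e + e') (fun x => f x * g x) := by
  obtain ⟨n, D, hD, hn, hh⟩ := hf
  obtain ⟨n', D', hD', hn', hh'⟩ := hg
  refine ⟨n * n', D * D', mul_ne_zero hD hD', ?_, ?_⟩
  · rw [natDegree_mul hD hD']
    exact (hn.mul hn').mono (by push_cast; omega)
  · filter_upwards [hh, hh', ev_ne hD, ev_ne hD'] with x h1 h2 h3 h4
    rw [h1, h2]; simp only [eval_mul]; field_simp

lemma RD.poly {e : ℤ} {p : ℝ[X]} (h : PD e p) : RD e (fun x => p.eval x) :=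
  ⟨p, 1, one_ne_zero, by simpa using h, by simp⟩

lemma RD.const (c : ℝ) : RD 0 (fun _ => c) := by
  have := RD.poly (e := 0) (p := C c) (Or.inr (by simp))
  simpa using this

lemma RD.zero (e : ℤ) : RD e (fun _ => 0) := by
  have := RD.poly (e := e) (p := 0) (Or.inl rfl)
  simpa using this

lemma RD.sum {ι : Type*} {e : ℤ} (s : Finset ι) {f : ι → ℝ → ℝ} (h : ∀ i ∈ s, RD e (f i)) :
    RD e (fun x => ∑ i ∈ s, f i x) := by
  classical
  induction s using Finset.induction_on with
  | empty => simpa using RD.zero e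
  | insert i s hi ih =>
    simp only [Finset.sum_insert hi]
    exact (h i (by simp)).add (ih fun j hj => h j (by simp [hj]))

lemma RD.pow {e : ℤ} {f : ℝ → ℝ} (hf : RD e f) (k : ℕ) : RD (k * e) (fun x => f x ^ k) := by
  induction k with
  | zero => simpa using RD.const 1
  | succ k ih =>
    simp only [pow_succ]
    exact (ih.mul hf).mono (by push_cast; linarith)

lemma RD.inv_lin (t : ℝ) : RD (-1) (fun x => (-(2 * x + t))⁻¹) := by
  have hd : (C (-2 : ℝ) * X + C (-t)).natDegree = 1 := natDegree_linear (by norm_num)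
  refine ⟨1, C (-2) * X + C (-t), ?_, Or.inr ?_, ?_⟩
  · intro h; rw [h] at hd; simp at hd
  · rw [hd]; simp
  · refine Filter.Eventually.of_forall fun x => ?_
    simp only [eval_one, eval_add, eval_mul, eval_C, eval_X, one_div]
    congr 1; ring

lemma RD.lin (t : ℝ) : RD 1 (fun x => (-(2 * x + t))) := by
  have hd : (C (-2 : ℝ) * X + C (-t)).natDegree = 1 := natDegree_linear (by norm_num)
  refine (RD.poly (e := 1) (p := C (-2) * X + C (-t)) (Or.inr (by rw [hd]; simp))).congr ?_
  refine Filter.Eventually.of_forall fun x => ?_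
  simp only [eval_add, eval_mul, eval_C, eval_X]
  ring

lemma RD.fwd {e : ℤ} {f : ℝ → ℝ} (hf : RD e f) : RD (e - 1) (fwdDiff 1 f) := by
  obtain ⟨n, D, hD, hn, hh⟩ := hf
  have hD' : taylor 1 D ≠ 0 := by
    intro h; apply hD; exact (taylor_injective 1) (by simpa using h)
  refine ⟨taylor 1 n * D - n * taylor 1 D, taylor 1 D * D, mul_ne_zero hD' hD, ?_, ?_⟩
  · rw [natDegree_mul hD' hD, natDegree_taylor]
    rcases hn with rfl | hn
    · left; simp
    by_cases h0 : n = 0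
    · left; simp [h0]
    by_cases h1 : taylor 1 n * D - n * taylor 1 D = 0
    · left; exact h1
    right
    have hn' : taylor 1 n ≠ 0 := by
      intro h; apply h0; exact (taylor_injective 1) (by simpa using h)
    have hlt := degree_sub_lt_left (p := taylor 1 n * D) (q := n * taylor 1 D)
      (by simp [degree_mul, degree_taylor]) (mul_ne_zero hn' hD)
      (by simp [leadingCoeff_mul, leadingCoeff_taylor])
    have := natDegree_lt_natDegree h1 hlt
    rw [natDegree_mul hn' hD, natDegree_taylor] at this
    push_cast
    omega
  · have hh' : ∀ᶠ x : ℝ in Filter.atTop, f (x + 1) = n.eval (x + 1) / D.eval (x + 1) :=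
      (Filter.tendsto_atTop_add_const_right _ (1:ℝ) Filter.tendsto_id).eventually hh
    filter_upwards [hh, hh', ev_ne hD, ev_ne hD'] with x h1 h2 h3 h4
    rw [fwdDiff, h1, h2]
    rw [taylor_eval] at h4
    simp only [eval_sub, eval_mul, taylor_eval]
    have h4' : eval (x + 1) D ≠ 0 := by rwa [add_comm] at h4 ⊢
    field_simp

lemma RD.fwd_iter {e : ℤ} {f : ℝ → ℝ} (hf : RD e f) (k : ℕ) :
    RD (e - k) ((fwdDiff 1)^[k] f) := by
  induction k with
  | zero => simpa using hf
  | succ k ih =>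
    rw [Function.iterate_succ_apply']
    exact ih.fwd.mono (by push_cast; omega)

lemma poly_of_RD {e : ℤ} {P : ℝ[X]} (h : RD e (fun x => P.eval x)) : PD e P := by
  obtain ⟨n, D, hD, hn, hh⟩ := h
  have hPD : P * D = n := by
    apply eq_of_infinite_eval_eq
    have : ∀ᶠ x in Filter.atTop, (P * D).eval x = n.eval x := by
      filter_upwards [hh, ev_ne hD] with x h1 h2
      rw [eval_mul, h1]; field_simp
    obtain ⟨B, hB⟩ := Filter.eventually_atTop.1 this
    exact (Set.Ici_infinite B).mono fun x hx => hB x hx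
  by_cases hP : P = 0
  · exact Or.inl hP
  right
  rcases hn with h0 | hn
  · exact absurd (hPD.trans h0) (mul_ne_zero hP hD)
  rw [← hPD, natDegree_mul hP hD] at hn
  push_cast at hn
  omega

lemma RD.rat (n D : ℝ[X]) (hD : D ≠ 0) : ∃ e : ℕ, RD e (fun x => n.eval x / D.eval x) :=
  ⟨n.natDegree, n, D, hD, Or.inr (by omega), by simp⟩

lemma sumA (ι : Type*) [Fintype ι] (c : ι → ℝ) (F : ι → ℝ) (T : ℝ) (g : ℕ) :
    ∑ j, (c j ^ 2 + c j * T) ^ g * F j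
      = ∑ i ∈ Finset.range (g+1), (g.choose i : ℝ) * T ^ (g - i) * ∑ j, c j ^ (g + i) * F j := by
  simp only [add_pow, Finset.sum_mul, Finset.mul_sum]
  rw [Finset.sum_comm]
  refine Finset.sum_congr rfl fun i hi => Finset.sum_congr rfl fun j _ => ?_
  have hi : i ≤ g := by simp at hi; omega
  obtain ⟨k, rfl⟩ := Nat.exists_eq_add_of_le hi
  simp only [Nat.add_sub_cancel_left]
  ring

lemma degree_part (t : ℝ) (m : ℕ) (F : Fin m → ℝ → ℝ) (L : ℕ → ℝ → ℝ) (d : ℤ)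
    (hF : ∃ e : ℕ, ∀ j, RD e (F j)) (hLd : ∀ g : ℕ, RD (2 * g + d) (L g))
    (hL : ∀ g, ∀ᶠ x in Filter.atTop, L g x =
      ∑ j : Fin m, ((x - ((j:ℕ) + 1)) * (x - ((j:ℕ) + 1) + t)) ^ g * F j x) :
    RD d (fun x => ∑ j : Fin m, F j (x + ((j:ℕ) + 1))) := by
  -- G
  have hG : ∀ g : ℕ, RD (2 * g + d) (fun x =>
      ∑ j : Fin m, (((j:ℕ) + 1 : ℝ) ^ 2 + ((j:ℕ) + 1) * (-(2 * x + t))) ^ g * F j x) := by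
    intro g
    have hth : RD 2 (fun x => -(x * (x + t))) := by
      refine (RD.poly (e := 2) (p := -(X * (X + C t))) (Or.inr ?_)).congr (by simp)
      rw [natDegree_neg, natDegree_mul X_ne_zero (X_add_C_ne_zero t)]
      simp
    have h1 : RD (2 * g + d) (fun x => ∑ h ∈ Finset.range (g+1),
        ((-(x * (x + t))) ^ (g - h) * (g.choose h : ℝ)) * L h x) := by
      refine RD.sum _ fun h hh => ?_
      have hh : h ≤ g := by simp at hh; omega
      refine (((hth.pow (g - h)).mul (RD.const (g.choose h))).mul (hLd h)).mono ?_
      push_cast [hh]; linarith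
    refine h1.congr ?_
    have := (Filter.eventually_all_finset (Finset.range (g+1))).2 (fun h _ => hL h)
    filter_upwards [this] with x hx
    have hR : ∑ h ∈ Finset.range (g+1), ((-(x * (x + t))) ^ (g - h) * (g.choose h : ℝ)) * L h x =
        ∑ h ∈ Finset.range (g+1), ((-(x * (x + t))) ^ (g - h) * (g.choose h : ℝ)) *
          ∑ j : Fin m, ((x - ((j:ℕ) + 1)) * (x - ((j:ℕ) + 1) + t)) ^ h * F j x :=
      Finset.sum_congr rfl fun h hh => by rw [hx h hh]
    rw [hR]
    simp only [Finset.mul_sum]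
    rw [Finset.sum_comm]
    refine Finset.sum_congr rfl fun j _ => ?_
    have : (((j:ℕ) + 1 : ℝ) ^ 2 + ((j:ℕ) + 1) * (-(2 * x + t))) =
      ((x - ((j:ℕ) + 1)) * (x - ((j:ℕ) + 1) + t)) + -(x * (x + t)) := by ring
    rw [this, add_pow, Finset.sum_mul]
    refine Finset.sum_congr rfl fun h _ => ?_
    ring
  obtain ⟨e, he⟩ := hF
  have hA : ∀ n : ℕ, ∀ k : ℕ, (e:ℤ) - d ≤ k + n →
      RD (d + k) (fun x => ∑ j : Fin m, ((j:ℕ) + 1 : ℝ) ^ k * F j x) := by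
    intro n
    induction n with
    | zero =>
      intro k hk
      refine RD.sum _ fun j _ => ?_
      exact ((RD.const _).mul (he j)).mono (by push_cast at hk; omega)
    | succ n ih =>
      intro g hg
      have h2 : RD (2 * g + d) (fun x => ∑ i ∈ Finset.range g,
          ((-(g.choose (i+1) : ℝ)) * (-(2 * x + t)) ^ (g - (i+1))) *
            ∑ j : Fin m, ((j:ℕ) + 1 : ℝ) ^ (g + (i+1)) * F j x) := by
        refine RD.sum _ fun i hi => ?_
        have hi : i + 1 ≤ g := by simp at hi; omega
        refine (((RD.const _).mul ((RD.lin t).pow _)).mul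
          (ih (g + (i+1)) (by push_cast at hg ⊢; omega))).mono ?_
        push_cast [hi]; linarith
      refine ((((RD.inv_lin t).pow g).mul ((hG g).add h2)).mono (e' := d + g)
        (by linarith)).congr ?_
      filter_upwards [Filter.eventually_gt_atTop (-t/2)] with x hx
      have hne : (-(2 * x + t)) ≠ 0 := by intro h; linarith
      rw [sumA (Fin m) (fun j => ((j:ℕ) + 1 : ℝ)) (fun j => F j x), Finset.sum_range_succ']
      simp only [neg_mul, Finset.sum_neg_distrib]
      rw [add_right_comm, add_neg_cancel, zero_add, inv_pow]
      simp only [Nat.choose_zero_right, Nat.cast_one, one_mul, Nat.sub_zero, add_zero]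
      rw [inv_mul_cancel_left₀ (pow_ne_zero _ hne)]
  have hA' : ∀ k : ℕ, RD (d + k) (fun x => ∑ j : Fin m, ((j:ℕ) + 1 : ℝ) ^ k * F j x) :=
    fun k => hA ((e:ℤ) - d).toNat k (by omega)
  have hq : ∀ (q : ℝ[X]) (k : ℕ), q.natDegree ≤ k →
      RD (d + k) (fun x => ∑ j : Fin m, q.eval ((j:ℕ) + 1 : ℝ) * F j x) := by
    intro q k hk
    have h1 : RD (d + k) (fun x => ∑ i ∈ Finset.range (k+1), q.coeff i *
        ∑ j : Fin m, ((j:ℕ) + 1 : ℝ) ^ i * F j x) := by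
      refine RD.sum _ fun i hi => ?_
      have hi : i ≤ k := by simp at hi; omega
      exact ((RD.const _).mul (hA' i)).mono (by omega)
    refine h1.congr (Filter.Eventually.of_forall fun x => ?_)
    simp only [Finset.mul_sum]
    rw [Finset.sum_comm]
    refine Finset.sum_congr rfl fun j _ => ?_
    rw [eval_eq_sum_range' (Nat.lt_succ_of_le hk), Finset.sum_mul]
    exact Finset.sum_congr rfl fun i _ => by ring
  have hB : ∀ k : ℕ, RD (d + k) (∑ j : Fin m, (((j:ℕ) + 1).choose k) • F j) := by
    intro k
    refine (hq (C ((k.factorial : ℝ)⁻¹) * descPochhammer ℝ k) k ?_).congr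
      (Filter.Eventually.of_forall fun x => ?_)
    · refine (natDegree_C_mul_le _ _).trans ?_
      rw [descPochhammer_natDegree]
    · rw [Finset.sum_apply]
      refine Finset.sum_congr rfl fun j _ => ?_
      rw [Pi.smul_apply, nsmul_eq_mul]
      congr 1
      rw [eval_mul, eval_C]
      have := descPochhammer_eval_eq_descFactorial ℝ ((j:ℕ)+1) k
      push_cast at this
      rw [this, Nat.descFactorial_eq_factorial_mul_choose]
      push_cast
      rw [inv_mul_cancel_left₀ (by exact_mod_cast k.factorial_ne_zero)]
  have hfin : RD d (fun x => ∑ k ∈ Finset.range (m+1),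
      ((fwdDiff 1)^[k] (∑ j : Fin m, (((j:ℕ) + 1).choose k) • F j)) x) :=
    RD.sum _ fun k _ => ((hB k).fwd_iter k).mono (by omega)
  refine hfin.congr (Filter.Eventually.of_forall fun x => ?_)
  simp only [fwdDiff_iter_finsetSum, fwdDiff_iter_const_smul, Finset.sum_apply, Pi.smul_apply]
  rw [Finset.sum_comm]
  refine Finset.sum_congr rfl fun j _ => ?_
  have := shift_eq_sum_fwdDiff_iter (1:ℝ) (F j) ((j:ℕ)+1) x
  simp only [nsmul_eq_mul, mul_one] at this
  push_cast at this
  rw [this]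
  simp only [nsmul_eq_mul]
  refine Finset.sum_subset (fun i hi => ?_) (fun i _ hi => ?_)
  · have := j.2
    simp at hi ⊢; omega
  · rw [Nat.choose_eq_zero_of_lt (by simpa using hi)]; simp

lemma sum_frac {K : Type*} [Field K] [Algebra ℝ K] {ι : Type*} [Fintype ι] [DecidableEq ι]
    (n d : ι → ℝ[X]) (z : K) (h : ∀ j, aeval z (d j) ≠ 0) :
    ∑ j, aeval z (n j) / aeval z (d j) =
      aeval z (∑ j, n j * ∏ i ∈ Finset.univ.erase j, d i) / aeval z (∏ j, d j) := by
  rw [map_sum, Finset.sum_div]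
  refine Finset.sum_congr rfl fun j _ => ?_
  rw [← Finset.mul_prod_erase _ _ (Finset.mem_univ j), map_mul, map_mul]
  have h2 : aeval z (∏ i ∈ Finset.univ.erase j, d i) ≠ 0 := by
    rw [map_prod]; exact Finset.prod_ne_zero_iff.2 fun i _ => h i
  rw [mul_div_mul_right _ _ h2]

lemma lift_id {ι : Type*} [Fintype ι] (n d : ι → ℝ[X]) (L : ℝ[X]) (hd : ∀ j, d j ≠ 0)
    (h : ∀ x : ℝ, (∀ j, (d j).eval x ≠ 0) → ∑ j, (n j).eval x / (d j).eval x = L.eval x)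
    (z : ℂ) (hz : ∀ j, aeval z (d j) ≠ 0) :
    ∑ j, aeval z (n j) / aeval z (d j) = aeval z L := by
  classical
  have hD : ∏ j, d j ≠ 0 := Finset.prod_ne_zero_iff.2 fun i _ => hd i
  have key : ∑ j, n j * ∏ i ∈ Finset.univ.erase j, d i = L * ∏ j, d j := by
    apply eq_of_infinite_eval_eq
    refine Set.Infinite.mono (s := {x | x ∉ ((∏ j, d j).roots.toFinset : Set ℝ)}) ?_ ?_
    · intro x hx
      have hx' : (∏ j, d j).eval x ≠ 0 := by
        intro h0; apply hx; simp only [Finset.mem_coe, Multiset.mem_toFinset]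
        exact (mem_roots hD).2 h0
      have hx2 : ∀ j, (d j).eval x ≠ 0 := by
        rw [eval_prod] at hx'
        exact fun j => Finset.prod_ne_zero_iff.1 hx' j (Finset.mem_univ _)
      have h1 := sum_frac n d x (by simpa [coe_aeval_eq_eval] using hx2)
      simp only [coe_aeval_eq_eval] at h1
      rw [h x hx2, eq_div_iff hx'] at h1
      simp only [Set.mem_ofPred_eq, eval_mul]
      exact h1.symm
    · exact (Finset.finite_toSet _).infinite_compl
  rw [sum_frac n d z hz, key, map_mul, mul_div_cancel_right₀]
  rw [map_prod]; exact Finset.prod_ne_zero_iff.2 fun i _ => hz i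

open Filter Topology

lemma ev_ne_c {d : ℝ[X]} (hd : d ≠ 0) (c : ℂ) : ∀ᶠ z in 𝓝[≠] c, aeval z d ≠ 0 := by
  have hd' : d.map (algebraMap ℝ ℂ) ≠ 0 := (Polynomial.map_ne_zero_iff (algebraMap ℝ ℂ).injective).2 hd
  have hfin : ((d.map (algebraMap ℝ ℂ)).roots.toFinset : Set ℂ).Finite := Finset.finite_toSet _
  have hmem := ((hfin.subset (Set.sdiff_subset (t := {c}))).isClosed.isOpen_compl).mem_nhds
    (x := c) (by simp)
  filter_upwards [mem_nhdsWithin_of_mem_nhds hmem, self_mem_nhdsWithin] with z h1 h2 h0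
  apply h1
  refine ⟨?_, h2⟩
  simp only [Finset.mem_coe, Multiset.mem_toFinset]
  rw [mem_roots hd', IsRoot, eval_map_algebraMap, h0]

lemma exists_res (n d : ℝ[X]) (hd : Squarefree d) (c : ℂ) :
    ∃ r : ℂ, Tendsto (fun z => (z - c) * (aeval z n / aeval z d)) (𝓝[≠] c) (𝓝 r) := by
  have hcont : ∀ p : ℂ[X], Tendsto (fun z => p.eval z) (𝓝[≠] c) (𝓝 (p.eval c)) :=
    fun p => (p.continuous.tendsto c).mono_left nhdsWithin_le_nhds
  have hsep : (d.map (algebraMap ℝ ℂ)).Separable :=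
    (PerfectField.separable_iff_squarefree.2 hd).map
  simp only [← eval_map_algebraMap]
  set D := d.map (algebraMap ℝ ℂ)
  set N := n.map (algebraMap ℝ ℂ)
  by_cases h0 : D.eval c = 0
  · obtain ⟨E, hE⟩ := dvd_iff_isRoot.2 h0
    have hEc : E.eval c ≠ 0 := by
      intro h1
      obtain ⟨E', hE'⟩ := dvd_iff_isRoot.2 h1
      have := hsep.squarefree (X - C c) ⟨E', by rw [hE, hE']; ring⟩
      exact not_isUnit_X_sub_C c this
    refine ⟨N.eval c / E.eval c, ((hcont N).div (hcont E) hEc).congr' ?_⟩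
    filter_upwards [self_mem_nhdsWithin] with z hz
    have hz' : z - c ≠ 0 := sub_ne_zero.2 hz
    rw [hE, eval_mul, eval_sub, eval_X, eval_C]
    simp only [Pi.div_apply]
    field_simp
  · refine ⟨(X - C c).eval c * (N.eval c / D.eval c),
      ((hcont (X - C c)).mul ((hcont N).div (hcont D) h0)).congr' ?_⟩
    refine Eventually.of_forall fun z => ?_
    simp

lemma select {ι : Type*} [Fintype ι] (v R : ι → ℂ) (h : ∀ g : ℕ, ∑ j, v j ^ g * R j = 0) (t : ℂ) :
    ∑ j, (if v j = t then R j else 0) = 0 := by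
  classical
  have hp : ∀ p : ℂ[X], ∑ j, p.eval (v j) * R j = 0 := by
    intro p
    simp only [eval_eq_sum_range, Finset.sum_mul]
    rw [Finset.sum_comm]
    refine Finset.sum_eq_zero fun g _ => ?_
    have := h g
    simp only [mul_assoc]
    rw [← Finset.mul_sum, this, mul_zero]
  let p : ℂ[X] := ∏ w ∈ (Finset.univ.image v).erase t, (X - C w)
  have hpt : p.eval t ≠ 0 := by
    rw [eval_prod]
    refine Finset.prod_ne_zero_iff.2 fun w hw => ?_
    simp only [eval_sub, eval_X, eval_C]
    exact sub_ne_zero.2 (Finset.ne_of_mem_erase hw).symm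
  have h2 : p.eval t * ∑ j, (if v j = t then R j else 0) = 0 := by
    refine Eq.trans ?_ (hp p)
    rw [Finset.mul_sum]
    refine Finset.sum_congr rfl fun j _ => ?_
    split_ifs with hj
    · rw [hj]
    · have : p.eval (v j) = 0 := by
        rw [eval_prod]
        refine Finset.prod_eq_zero (i := v j) ?_ (by simp)
        simp [hj]
      rw [this]; simp
  exact (mul_eq_zero.1 h2).resolve_left hpt

lemma rho_anti (t : ℂ) (m : ℕ) (R : Fin m → ℂ → ℂ)
    (h : ∀ c (g : ℕ), ∑ j : Fin m, ((c - ((j:ℕ)+1)) * (c - ((j:ℕ)+1) + t)) ^ g * R j c = 0) (y : ℂ) :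
    ∑ j : Fin m, R j (y + ((j:ℕ)+1)) = - ∑ j : Fin m, R j (-(y + t) + ((j:ℕ)+1)) := by
  classical
  have sel : ∀ (y : ℂ) (j : Fin m), ∑ i : Fin m,
      (if i = j ∨ (i : ℂ) = (j:ℕ) + (2 * y + t) then R i (y + ((j:ℕ)+1)) else 0) = 0 := by
    intro y j
    refine Eq.trans ?_ (select _ (fun i => R i (y + ((j:ℕ)+1))) (h (y + ((j:ℕ)+1))) (y * (y + t)))
    refine Finset.sum_congr rfl fun i _ => ?_
    refine if_congr ?_ rfl rfl
    have e : (y + ((j:ℕ)+1) - ((i:ℕ)+1)) * (y + ((j:ℕ)+1) - ((i:ℕ)+1) + t) - y * (y + t)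
      = ((j:ℕ) - (i:ℕ) : ℂ) * ((j:ℕ) + (2 * y + t) - (i:ℕ)) := by ring
    rw [← sub_eq_zero (b := y * (y + t)), e, mul_eq_zero, sub_eq_zero, sub_eq_zero]
    refine or_congr ?_ eq_comm
    rw [Nat.cast_inj, Fin.val_inj, eq_comm]
  by_cases hs : 2 * y + t = 0
  · have hz : ∀ j : Fin m, R j (y + ((j:ℕ)+1)) = 0 := by
      intro j
      have := sel y j
      rw [hs] at this
      simpa [Fin.val_inj] using this
    have hy : -(y + t) = y := by linear_combination -hs
    rw [hy]
    simp [hz]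
  · have sel2 : ∀ (y : ℂ) (j : Fin m), 2 * y + t ≠ 0 → R j (y + ((j:ℕ)+1)) = - ∑ i : Fin m,
      (if (i : ℂ) = (j:ℕ) + (2 * y + t) then R i (y + ((j:ℕ)+1)) else 0) := by
      intro y j hs
      rw [eq_neg_iff_add_eq_zero]
      refine Eq.trans ?_ (sel y j)
      have : R j (y + ((j:ℕ)+1)) = ∑ i : Fin m, if i = j then R i (y + ((j:ℕ)+1)) else 0 := by simp
      rw [this, ← Finset.sum_add_distrib]
      refine Finset.sum_congr rfl fun i _ => ?_
      by_cases hij : i = j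
      · subst hij; simp [hs]
      · simp [hij]
    rw [Finset.sum_congr rfl fun j _ => sel2 y j hs, Finset.sum_neg_distrib, neg_inj,
      Finset.sum_comm]
    refine Finset.sum_congr rfl fun i _ => ?_
    by_cases hex : ∃ j : Fin m, (i : ℂ) = (j:ℕ) + (2 * y + t)
    · obtain ⟨j, hj⟩ := hex
      rw [Finset.sum_eq_single j]
      · rw [if_pos hj]
        congr 1; rw [hj]; ring
      · intro k _ hk
        rw [if_neg]
        intro hk2
        apply hk
        have : ((k:ℕ):ℂ) = (j:ℕ) := by linear_combination hj - hk2
        exact Fin.ext (Nat.cast_injective this)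
      · simp
    · push Not at hex
      rw [Finset.sum_eq_zero fun j _ => if_neg (hex j)]
      rw [sel2 (-(y+t)) i (by intro h; apply hs; linear_combination -h)]
      rw [Finset.sum_eq_zero, neg_zero]
      intro j _
      rw [if_neg]
      intro hj
      exact hex j (by linear_combination -hj)

lemma dvd_part (W V : ℝ[X]) (hV : V ≠ 0)
    (h : ∀ y : ℂ, Tendsto (fun z => (z - y) * (aeval z W / aeval z V)) (𝓝[≠] y) (𝓝 0)) :
    V ∣ W := by
  classical
  obtain ⟨G, W', V', hcop, hW, hV'⟩ : ∃ G W' V' : ℝ[X], IsCoprime W' V' ∧ W = G * W' ∧ V = G * V' := by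
    obtain ⟨w, hw⟩ := EuclideanDomain.gcd_dvd_left W V
    obtain ⟨v, hv⟩ := EuclideanDomain.gcd_dvd_right W V
    refine ⟨EuclideanDomain.gcd W V, w, v, ?_, hw, hv⟩
    have hg : EuclideanDomain.gcd W V ≠ 0 := fun h0 => hV (EuclideanDomain.gcd_eq_zero_iff.1 h0).2
    refine ⟨EuclideanDomain.gcdA W V, EuclideanDomain.gcdB W V, ?_⟩
    have := EuclideanDomain.gcd_eq_gcd_ab W V
    apply mul_left_cancel₀ hg
    calc _ = (EuclideanDomain.gcd W V * w) * EuclideanDomain.gcdA W V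
          + (EuclideanDomain.gcd W V * v) * EuclideanDomain.gcdB W V := by ring
      _ = _ := by rw [← hw, ← hv, ← this, mul_one]
  have hG : G ≠ 0 := by rintro rfl; simp at hV'; exact hV hV'
  have hVne : V' ≠ 0 := by rintro rfl; simp at hV'; exact hV hV'
  by_cases hu : IsUnit V'
  · rw [hW, hV']
    exact mul_dvd_mul_left G hu.dvd
  exfalso
  have hdeg : V'.degree ≠ 0 := fun h0 => hu (isUnit_iff_degree_eq_zero.2 h0)
  obtain ⟨y, hy⟩ := IsAlgClosed.exists_aeval_eq_zero ℂ V' hdeg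
  have hWy : aeval y W' ≠ 0 := by
    intro h0
    obtain ⟨u, v, huv⟩ := hcop
    have := congrArg (aeval y) huv
    simp [h0, hy] at this
  have hcont : ∀ p : ℂ[X], Tendsto (fun z => p.eval z) (𝓝[≠] y) (𝓝 (p.eval y)) :=
    fun p => (p.continuous.tendsto y).mono_left nhdsWithin_le_nhds
  rw [← eval_map_algebraMap] at hy hWy
  obtain ⟨E, hE⟩ := dvd_iff_isRoot.2 hy
  apply hWy
  refine tendsto_nhds_unique (hcont (W'.map (algebraMap ℝ ℂ))) ?_
  have := (h y).mul (hcont E)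
  rw [zero_mul] at this
  refine this.congr' ?_
  filter_upwards [self_mem_nhdsWithin, ev_ne_c hG y, ev_ne_c hVne y] with z hz h1 h2
  have hz' : z - y ≠ 0 := sub_ne_zero.2 hz
  rw [hW, hV', map_mul, map_mul, mul_div_mul_left _ _ h1]
  rw [← eval_map_algebraMap] at h2 
  rw [← eval_map_algebraMap, ← eval_map_algebraMap]
  rw [hE, eval_mul] at h2 ⊢
  have h3 := right_ne_zero_of_mul h2
  rw [eval_sub, eval_X, eval_C]
  field_simp

theorem stmt_13 (a b : ℝ) (m : ℕ) (hm : 0 < m)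
    (num den : Fin m → ℝ[X])
    -- each Ψ_j = num j / den j has at most simple poles (squarefree denominator)
    (hden : ∀ j, Squarefree (den j))
    (Ψ : Fin m → ℝ → ℝ)
    (hΨ : ∀ j x, Ψ j x = (num j).eval x / (den j).eval x)
    -- for every polynomial p, L_p(x) = ∑_j (-1)^j p(θ(x-j)) Ψ_j(x) equals the polynomial Lp p
    (Lp : ℝ[X] → ℝ[X])
    (hL : ∀ p : ℝ[X], ∀ x : ℝ, (∀ j, (den j).eval x ≠ 0) →
      (∑ j : Fin m, (-1 : ℝ) ^ ((j : ℕ) + 1) *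
          p.eval ((x - ((j : ℕ) + 1)) * ((x - ((j : ℕ) + 1)) + a + b + 1)) * Ψ j x)
        = (Lp p).eval x)
    (M : ℝ → ℝ)
    (hM : ∀ x, M x = ∑ j : Fin m, (-1 : ℝ) ^ ((j : ℕ) + 1) * Ψ j (x + ((j : ℕ) + 1)))
    -- skew-invariance of M under x ↦ -(x+a+b+1), away from the poles
    (hskew : ∀ x : ℝ,
      (∀ j, (den j).eval (x + ((j : ℕ) + 1)) ≠ 0) →
      (∀ j, (den j).eval (-(x + a + b + 1) + ((j : ℕ) + 1)) ≠ 0) →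
      M (-(x + a + b + 1)) = -M x)
    -- deg L_{x^g} ≤ 2g + deg L_1 for all g
    (hdeg : ∀ g : ℕ, (Lp (X ^ g)).degree ≤ (Lp 1).degree + 2 * g) :
    -- M is a polynomial of degree at most deg L_1
    ∃ P : ℝ[X], P.degree ≤ (Lp 1).degree ∧
      ∀ x : ℝ, (∀ j, (den j).eval (x + ((j : ℕ) + 1)) ≠ 0) → M x = P.eval x := by
  classical
  have hd0 : ∀ j, den j ≠ 0 := fun j => (hden j).ne_zero
  set t : ℝ := a + b + 1 with ht
  let s : Fin m → ℝ := fun j => (-1 : ℝ) ^ ((j : ℕ) + 1)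
  -- polynomials for M
  let nM : Fin m → ℝ[X] := fun j => C (s j) * taylor ((j:ℕ) + 1 : ℝ) (num j)
  let dM : Fin m → ℝ[X] := fun j => taylor ((j:ℕ) + 1 : ℝ) (den j)
  have hdM : ∀ j, dM j ≠ 0 := fun j h =>
    hd0 j ((taylor_injective ((j:ℕ) + 1 : ℝ)) (h.trans (map_zero _).symm))
  have hMx : ∀ x, M x = ∑ j, (nM j).eval x / (dM j).eval x := by
    intro x
    rw [hM]
    refine Finset.sum_congr rfl fun j _ => ?_
    simp only [nM, dM, s, eval_mul, eval_C, taylor_eval, hΨ]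
    ring
  let W : ℝ[X] := ∑ j, nM j * ∏ i ∈ Finset.univ.erase j, dM i
  let V : ℝ[X] := ∏ j, dM j
  have hV : V ≠ 0 := Finset.prod_ne_zero_iff.2 fun i _ => hdM i
  choose r hr using fun j c => exists_res (num j) (den j) (hden j) c
  have hdM_ne : ∀ x : ℝ, (∀ j, (den j).eval (x + ((j : ℕ) + 1)) ≠ 0) ↔ ∀ j, (dM j).eval x ≠ 0 := by
    intro x
    simp only [dM, taylor_eval]
  -- residues
  have hR : ∀ (c : ℂ) (g : ℕ), ∑ j : Fin m,
      ((c - ((j:ℕ)+1)) * (c - ((j:ℕ)+1) + (t : ℂ))) ^ g * ((s j : ℂ) * r j c) = 0 := by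
    intro c g
    have hlift := lift_id (fun j : Fin m => C (s j) *
      ((X - C ((j:ℕ) + 1 : ℝ)) * (X - C ((j:ℕ) + 1 : ℝ) + C t)) ^ g * num j) den (Lp (X ^ g)) hd0 (by
        intro x hx
        rw [← hL (X ^ g) x hx]
        refine Finset.sum_congr rfl fun j _ => ?_
        simp only [eval_mul, eval_C, eval_pow, eval_sub, eval_add, eval_X, hΨ, s, ht]
        ring)
    have hall : ∀ᶠ z in 𝓝[≠] c, ∀ j, aeval z (den j) ≠ 0 :=
      eventually_all.2 fun j => ev_ne_c (hd0 j) c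
    have l1 : Tendsto (fun z : ℂ => (z - c) * aeval z (Lp (X ^ g))) (𝓝[≠] c) (𝓝 0) := by
      have : Continuous (fun z : ℂ => (z - c) * aeval z (Lp (X ^ g))) := by
        have := (Lp (X ^ g)).continuous_aeval (A := ℂ)
        fun_prop
      have := (this.tendsto c).mono_left (nhdsWithin_le_nhds (s := {c}ᶜ))
      simpa using this
    refine tendsto_nhds_unique ?_ l1
    have l2 : Tendsto (fun z : ℂ => ∑ j : Fin m,
      ((z - ((j:ℕ)+1)) * (z - ((j:ℕ)+1) + (t : ℂ))) ^ g * ((s j : ℂ) *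
        ((z - c) * (aeval z (num j) / aeval z (den j))))) (𝓝[≠] c) (𝓝 (∑ j : Fin m,
      ((c - ((j:ℕ)+1)) * (c - ((j:ℕ)+1) + (t : ℂ))) ^ g * ((s j : ℂ) * r j c))) := by
      refine tendsto_finsetSum _ fun j _ => ?_
      refine Tendsto.mul ?_ ((hr j c).const_mul _)
      have : Continuous (fun z : ℂ => ((z - ((j:ℕ)+1)) * (z - ((j:ℕ)+1) + (t : ℂ))) ^ g) := by
        fun_prop
      exact (this.tendsto c).mono_left nhdsWithin_le_nhds
    refine l2.congr' ?_
    filter_upwards [hall] with z hz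
    rw [← hlift z hz, Finset.mul_sum]
    refine Finset.sum_congr rfl fun j _ => ?_
    simp only [map_mul, map_pow, map_sub, map_add, aeval_X, aeval_C, Complex.coe_algebraMap,
      Complex.ofReal_natCast, Complex.ofReal_one]
    ring
  let ρ : ℂ → ℂ := fun y => ∑ j : Fin m, (s j : ℂ) * r j (y + ((j:ℕ)+1))
  have hanti : ∀ y, ρ y = - ρ (-(y + t)) := fun y =>
    rho_anti (t : ℂ) m (fun j c => (s j : ℂ) * r j c) hR y
  have hWV : ∀ y : ℂ, ∀ᶠ z in 𝓝[≠] y, aeval z W / aeval z V = ∑ j, aeval z (nM j) / aeval z (dM j) := by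
    intro y
    have hall : ∀ᶠ z in 𝓝[≠] y, ∀ j, aeval z (dM j) ≠ 0 :=
      eventually_all.2 fun j => ev_ne_c (hdM j) y
    filter_upwards [hall] with z hz
    exact (sum_frac nM dM z hz).symm
  have hlim : ∀ y : ℂ, Tendsto (fun z => (z - y) * (aeval z W / aeval z V)) (𝓝[≠] y) (𝓝 (ρ y)) := by
    intro y
    have l2 : Tendsto (fun z : ℂ => ∑ j : Fin m, (s j : ℂ) *
        (((z + ((j:ℕ)+1)) - (y + ((j:ℕ)+1))) * (aeval (z + ((j:ℕ)+1)) (num j) / aeval (z + ((j:ℕ)+1)) (den j))))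
        (𝓝[≠] y) (𝓝 (ρ y)) := by
      refine tendsto_finsetSum _ fun j _ => Tendsto.const_mul _ ?_
      refine (hr j (y + ((j:ℕ)+1))).comp (f := fun z : ℂ => z + ((j:ℕ)+1)) ?_
      refine tendsto_nhdsWithin_iff.2 ⟨?_, ?_⟩
      · exact ((continuous_id.add continuous_const).tendsto y).mono_left nhdsWithin_le_nhds
      · filter_upwards [self_mem_nhdsWithin] with z hz
        simpa using hz
    refine l2.congr' ?_
    filter_upwards [hWV y] with z hz
    rw [hz, Finset.mul_sum]
    refine Finset.sum_congr rfl fun j _ => ?_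
    simp only [nM, dM, map_mul, aeval_C, taylor_apply, aeval_comp, map_add, aeval_X, Complex.coe_algebraMap, Complex.ofReal_add,
      Complex.ofReal_natCast, Complex.ofReal_one]
    ring
  have hσd : (-(X + C t) : ℝ[X]).natDegree = 1 := by rw [natDegree_neg, natDegree_X_add_C]
  have hcomp : ∀ p : ℝ[X], p ≠ 0 → p.comp (-(X + C t)) ≠ 0 := by
    intro p hp h0
    rcases comp_eq_zero_iff.1 h0 with h | ⟨_, h⟩
    · exact hp h
    · rw [h] at hσd; simp at hσd
  have hσ : ∀ z : ℂ, aeval z (-(X + C t) : ℝ[X]) = -(z + t) := by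
    intro z; simp
  have hsk := lift_id (Sum.elim nM (fun j => (nM j).comp (-(X + C t))))
    (Sum.elim dM (fun j => (dM j).comp (-(X + C t)))) 0
    (by rintro (j | j)
        · exact hdM j
        · exact hcomp _ (hdM j))
    (by
      intro x hx
      rw [Fintype.sum_sum_type]
      have h1 : ∀ j, (dM j).eval x ≠ 0 := fun j => hx (Sum.inl j)
      have h2 : ∀ j, (dM j).eval (-(x + t)) ≠ 0 := fun j => by
        have := hx (Sum.inr j)
        simpa only [Sum.elim_inr, eval_comp, eval_neg, eval_add, eval_X, eval_C] using this
      have e : -(x + a + b + 1) = -(x + t) := by rw [ht]; ring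
      have := hskew x ((hdM_ne x).2 h1) (by rw [e]; exact (hdM_ne _).2 h2)
      rw [e, hMx, hMx] at this
      simp only [Sum.elim_inl, Sum.elim_inr, eval_comp, eval_neg, eval_add, eval_X, eval_C, eval_zero]
      rw [this]; ring)
  have hsym : ∀ y, ρ y = ρ (-(y + t)) := by
    intro y
    have hT : Tendsto (fun z : ℂ => -(z + t)) (𝓝[≠] y) (𝓝[≠] (-(y + t))) := by
      refine tendsto_nhdsWithin_iff.2 ⟨?_, ?_⟩
      · have : Continuous (fun z : ℂ => -(z + t)) := by fun_prop
        exact (this.tendsto y).mono_left nhdsWithin_le_nhds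
      · filter_upwards [self_mem_nhdsWithin] with z hz
        simpa using hz
    have l1 := (hlim (-(y + t))).comp hT
    refine tendsto_nhds_unique (hlim y) (l1.congr' ?_)
    have hall : ∀ᶠ z in 𝓝[≠] y, ∀ j, aeval z (dM j) ≠ 0 :=
      eventually_all.2 fun j => ev_ne_c (hdM j) y
    have hall2 : ∀ᶠ z in 𝓝[≠] y, ∀ j, aeval z ((dM j).comp (-(X + C t))) ≠ 0 :=
      eventually_all.2 fun j => ev_ne_c (hcomp _ (hdM j)) y
    filter_upwards [hWV y, hT.eventually (hWV (-(y + t))), hall, hall2] with z h1 h2 h3 h4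
    have h5 := hsk z (by rintro (j | j); exacts [h3 j, h4 j])
    rw [Fintype.sum_sum_type] at h5
    simp only [Sum.elim_inl, Sum.elim_inr, aeval_comp, hσ, map_zero] at h5
    rw [← h1, ← h2] at h5
    simp only [Function.comp]
    linear_combination (-(z - y)) * h5
  have hρ : ∀ y, ρ y = 0 := by
    intro y
    have h1 := hanti y
    rw [← hsym y] at h1
    exact self_eq_neg.1 h1
  obtain ⟨P, hP⟩ := dvd_part W V hV (fun y => by rw [← hρ y]; exact hlim y)
  have hMP : ∀ x : ℝ, (∀ j, (dM j).eval x ≠ 0) → M x = P.eval x := by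
    intro x hx
    have h1 := sum_frac nM dM x (by simpa [coe_aeval_eq_eval] using hx)
    simp only [coe_aeval_eq_eval] at h1
    have hVx : V.eval x ≠ 0 := by
      rw [eval_prod]; exact Finset.prod_ne_zero_iff.2 fun i _ => hx i
    rw [hMx, h1]
    change W.eval x / V.eval x = _
    rw [hP, eval_mul, mul_div_cancel_left₀ _ hVx]
  refine ⟨P, ?_, fun x hx => hMP x ((hdM_ne x).1 hx)⟩
  -- degree
  have hdegP : ∀ d : ℤ, PD d (Lp 1) → PD d P := by
    intro d hd
    apply poly_of_RD
    have hF : ∀ j : Fin m, ∃ e : ℕ, RD e (fun x => s j * Ψ j x) := by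
      intro j
      obtain ⟨e, he⟩ := RD.rat (num j) (den j) (hd0 j)
      refine ⟨e, ((RD.const (s j)).mul he).mono (by simp) |>.congr (.of_forall fun x => ?_)⟩
      rw [hΨ]
    choose e he using hF
    have := degree_part t m (fun j x => s j * Ψ j x) (fun g x => (Lp (X ^ g)).eval x) d
      ⟨∑ j, e j, fun j => (he j).mono (by
        exact_mod_cast Finset.single_le_sum (fun i _ => Nat.zero_le (e i)) (Finset.mem_univ j))⟩
      (by
        intro g
        apply RD.poly
        by_cases h0 : Lp (X ^ g) = 0
        · exact Or.inl h0
        right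
        have hg := hdeg g
        rcases hd with h1 | h1
        · rw [h1] at hg; simp at hg; exact absurd hg h0
        by_cases h2 : Lp 1 = 0
        · rw [h2] at hg; simp at hg; exact absurd hg h0
        rw [degree_eq_natDegree h0, degree_eq_natDegree h2] at hg
        have : (Lp (X ^ g)).natDegree ≤ (Lp 1).natDegree + 2 * g := by exact_mod_cast hg
        omega)
      (by
        intro g
        have hall : ∀ᶠ x in atTop, ∀ j, (den j).eval x ≠ 0 := eventually_all.2 fun j => ev_ne (hd0 j)
        filter_upwards [hall] with x hx
        rw [← hL (X ^ g) x hx]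
        refine Finset.sum_congr rfl fun j _ => ?_
        simp only [eval_pow, eval_X, s, ht]
        ring)
    refine this.congr ?_
    have hall : ∀ᶠ x in atTop, ∀ j, (dM j).eval x ≠ 0 := eventually_all.2 fun j => ev_ne (hdM j)
    filter_upwards [hall] with x hx
    rw [← hMP x hx, hM]
  by_cases h0 : Lp 1 = 0
  · rcases hdegP (-1) (Or.inl h0) with h | h
    · simp [h]
    · omega
  · rcases hdegP (Lp 1).natDegree (Or.inr le_rfl) with h | h
    · simp [h]
    · rw [degree_eq_natDegree h0]
      exact natDegree_le_iff_degree_le.1 (by exact_mod_cast h)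
end
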